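/- arXiv:1112.4959 — 5 statements merged into one kernel-verified Lean document; each statement's English description precedes it below -/
import Mathlib

section
/- Let S be a unitary 2L×2L complex matrix written in L×L blocks as S = [[α, β],[γ, δ]]. Then the following are equivalent: (i) β is invertible; (ii) γ is invertible; (iii) α*α < 1 (i.e. 1 − α*α is positive definite); (iv) δ*δ < 1 (i.e. 1 − δ*δ is positive definite). -/
open Matrix
open scoped ComplexOrder

lemma aux_posDef {L : ℕ} (M : Matrix (Fin L) (Fin L) ℂ) :
    (Mᴴ * M).PosDef ↔ IsUnit M := by
  rw [(posSemidef_conjTranspose_mul_self M).posDef_iff_isUnit, isUnit_iff_isUnit_det,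
    isUnit_iff_isUnit_det M, det_mul, det_conjTranspose]
  simp

/-- For a unitary `2L×2L` matrix `S = [[α, β],[γ, δ]]` (in `L×L` blocks),
the following are equivalent: `β` invertible; `γ` invertible; `α*α < 1`; `δ*δ < 1`. -/
theorem stmt_0 (L : ℕ) (hL : 1 ≤ L)
    (α β γ δ : Matrix (Fin L) (Fin L) ℂ)
    (hS : fromBlocks α β γ δ ∈ Matrix.unitaryGroup (Fin L ⊕ Fin L) ℂ) :
    List.TFAE [IsUnit β, IsUnit γ, (1 - αᴴ * α).PosDef, (1 - δᴴ * δ).PosDef] := by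
  have h1 := Matrix.mem_unitaryGroup_iff.mp hS
  have h2 := Matrix.mem_unitaryGroup_iff'.mp hS
  rw [star_eq_conjTranspose, fromBlocks_conjTranspose, fromBlocks_multiply, ← fromBlocks_one,
    fromBlocks_inj] at h1 h2
  obtain ⟨a1, -, -, -⟩ := h1
  obtain ⟨b1, -, -, b4⟩ := h2
  have e1 : 1 - αᴴ * α = γᴴ * γ := by rw [← b1]; abel
  have e2 : 1 - δᴴ * δ = βᴴ * β := by rw [← b4]; abel
  have e3 : 1 - α * αᴴ = β * βᴴ := by rw [← a1]; abel
  have hd := det_one_sub_mul_comm α αᴴ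
  rw [e1, e3, det_mul, det_mul, det_conjTranspose, det_conjTranspose] at hd
  have hbg : IsUnit β ↔ IsUnit γ := by
    rw [isUnit_iff_isUnit_det, isUnit_iff_isUnit_det γ, isUnit_iff_ne_zero, isUnit_iff_ne_zero,
      not_iff_not]
    constructor <;> intro h <;> simpa [h] using hd
  rw [e1, e2]
  tfae_have 1 ↔ 2 := hbg
  tfae_have 3 ↔ 2 := aux_posDef γ
  tfae_have 4 ↔ 1 := aux_posDef β
  tfae_finish
end

section
/- The map φ defined on 2L×2L block matrices by φ([[α, β],[γ, δ]]) = [[γ − δβ⁻¹α, δβ⁻¹],[−β⁻¹α, β⁻¹]] is a bijection from U(2L)_inv onto U(L,L), with inverse given by [[A, B],[C, D]] ↦ [[−D⁻¹C, D⁻¹],[A − BD⁻¹C, BD⁻¹]]. -/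
open Matrix

/-- The fundamental form `𝓛 = diag(1, −1)`. -/
noncomputable def Lform (L : ℕ) : Matrix (Fin L ⊕ Fin L) (Fin L ⊕ Fin L) ℂ :=
  fromBlocks 1 0 0 (-1)

/-- The Lorentz group `U(L,L)` of signature `(L,L)`. -/
def ULL (L : ℕ) : Set (Matrix (Fin L ⊕ Fin L) (Fin L ⊕ Fin L) ℂ) :=
  {T | Tᴴ * Lform L * T = Lform L}

/-- The set `U(2L)_inv` of unitary matrices with invertible upper-right block. -/
def U2Linv (L : ℕ) : Set (Matrix (Fin L ⊕ Fin L) (Fin L ⊕ Fin L) ℂ) :=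
  {S | S ∈ Matrix.unitaryGroup (Fin L ⊕ Fin L) ℂ ∧ IsUnit S.toBlocks₁₂}

/-- The map `φ` from scattering matrices to transfer matrices. -/
noncomputable def phiMap {L : ℕ} (S : Matrix (Fin L ⊕ Fin L) (Fin L ⊕ Fin L) ℂ) :
    Matrix (Fin L ⊕ Fin L) (Fin L ⊕ Fin L) ℂ :=
  fromBlocks (S.toBlocks₂₁ - S.toBlocks₂₂ * S.toBlocks₁₂⁻¹ * S.toBlocks₁₁)
    (S.toBlocks₂₂ * S.toBlocks₁₂⁻¹) (-(S.toBlocks₁₂⁻¹ * S.toBlocks₁₁)) S.toBlocks₁₂⁻¹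

/-- The claimed inverse map of `φ`. -/
noncomputable def psiMap {L : ℕ} (T : Matrix (Fin L ⊕ Fin L) (Fin L ⊕ Fin L) ℂ) :
    Matrix (Fin L ⊕ Fin L) (Fin L ⊕ Fin L) ℂ :=
  fromBlocks (-(T.toBlocks₂₂⁻¹ * T.toBlocks₂₁)) T.toBlocks₂₂⁻¹
    (T.toBlocks₁₁ - T.toBlocks₁₂ * T.toBlocks₂₂⁻¹ * T.toBlocks₂₁)
    (T.toBlocks₁₂ * T.toBlocks₂₂⁻¹)

theorem phi_psi {L : ℕ} (T : Matrix (Fin L ⊕ Fin L) (Fin L ⊕ Fin L) ℂ)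
    (h : IsUnit T.toBlocks₂₂) : phiMap (psiMap T) = T := by
  have hd := (Matrix.isUnit_iff_isUnit_det _).1 h
  conv_rhs => rw [← fromBlocks_toBlocks T]
  simp only [phiMap, psiMap, toBlocks_fromBlocks₁₁, toBlocks_fromBlocks₁₂,
    toBlocks_fromBlocks₂₁, toBlocks_fromBlocks₂₂, Matrix.nonsing_inv_nonsing_inv _ hd]
  congr 1
  · simp [Matrix.mul_assoc, Matrix.mul_nonsing_inv_cancel_left _ _ hd]
  · simp [Matrix.mul_assoc, Matrix.nonsing_inv_mul _ hd]
  · simp [Matrix.mul_nonsing_inv_cancel_left _ _ hd]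

theorem psi_phi {L : ℕ} (S : Matrix (Fin L ⊕ Fin L) (Fin L ⊕ Fin L) ℂ)
    (h : IsUnit S.toBlocks₁₂) : psiMap (phiMap S) = S := by
  have hd := (Matrix.isUnit_iff_isUnit_det _).1 h
  conv_rhs => rw [← fromBlocks_toBlocks S]
  simp only [phiMap, psiMap, toBlocks_fromBlocks₁₁, toBlocks_fromBlocks₁₂,
    toBlocks_fromBlocks₂₁, toBlocks_fromBlocks₂₂, Matrix.nonsing_inv_nonsing_inv _ hd]
  congr 1
  · simp [Matrix.mul_nonsing_inv_cancel_left _ _ hd]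
  · simp [Matrix.mul_assoc, Matrix.mul_nonsing_inv_cancel_left _ _ hd]
  · simp [Matrix.mul_assoc, Matrix.nonsing_inv_mul _ hd]

theorem phi_mem_iff {L : ℕ} (S : Matrix (Fin L ⊕ Fin L) (Fin L ⊕ Fin L) ℂ)
    (h : IsUnit S.toBlocks₁₂) :
    phiMap S ∈ ULL L ↔ S ∈ Matrix.unitaryGroup (Fin L ⊕ Fin L) ℂ := by
  have hd := (Matrix.isUnit_iff_isUnit_det _).1 h
  let Q : Matrix (Fin L ⊕ Fin L) (Fin L ⊕ Fin L) ℂ := fromBlocks 1 0 S.toBlocks₁₁ S.toBlocks₁₂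
  let P : Matrix (Fin L ⊕ Fin L) (Fin L ⊕ Fin L) ℂ := fromBlocks S.toBlocks₂₁ S.toBlocks₂₂ 0 1
  have hQ : IsUnit Q := by
    rw [Matrix.isUnit_iff_isUnit_det]
    simpa [Q, Matrix.det_fromBlocks_zero₁₂] using hd
  have hP : phiMap S * Q = P := by
    simp only [phiMap, Q, P, fromBlocks_multiply]
    congr 1 <;> simp [Matrix.mul_assoc, Matrix.nonsing_inv_mul _ hd]
  have key : Pᴴ * Lform L * P - Qᴴ * Lform L * Q = Sᴴ * S - 1 := by
    conv_rhs => rw [← fromBlocks_toBlocks S, ← fromBlocks_one]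
    simp only [P, Q, Lform, fromBlocks_conjTranspose, fromBlocks_multiply, sub_eq_add_neg,
      fromBlocks_neg, fromBlocks_add]
    congr 1 <;> simp <;> abel
  have hQ' : IsUnit Qᴴ := by simpa [star_eq_conjTranspose] using hQ.star
  rw [Matrix.mem_unitaryGroup_iff', star_eq_conjTranspose, ← sub_eq_zero, ← key, sub_eq_zero,
    ← hP, conjTranspose_mul]
  have e : Qᴴ * (phiMap S)ᴴ * Lform L * (phiMap S * Q)
      = Qᴴ * ((phiMap S)ᴴ * Lform L * phiMap S) * Q := by simp only [Matrix.mul_assoc]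
  rw [e, hQ.mul_left_inj, hQ'.mul_right_inj]
  rfl

open scoped ComplexOrder in
theorem ULL_unit {L : ℕ} (T : Matrix (Fin L ⊕ Fin L) (Fin L ⊕ Fin L) ℂ)
    (h : T ∈ ULL L) : IsUnit T.toBlocks₂₂ := by
  have h1 : Tᴴ * Lform L * T = Lform L := h
  rw [← fromBlocks_toBlocks T] at h1
  simp only [Lform, fromBlocks_conjTranspose, fromBlocks_multiply, fromBlocks_inj] at h1
  have h2 := h1.2.2.2
  simp only [Matrix.mul_one, Matrix.mul_zero, Matrix.mul_neg, Matrix.neg_mul, add_zero,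
    zero_add] at h2
  have h3 : T.toBlocks₂₂ᴴ * T.toBlocks₂₂ = 1 + T.toBlocks₁₂ᴴ * T.toBlocks₁₂ := by
    rw [← sub_eq_zero]
    have := sub_eq_zero.2 h2.symm
    rw [← this]; abel
  have h4 : (T.toBlocks₂₂ᴴ * T.toBlocks₂₂).PosDef := by
    rw [h3]
    exact Matrix.PosDef.one.add_posSemidef (Matrix.posSemidef_conjTranspose_mul_self _)
  have h5 := (Matrix.isUnit_iff_isUnit_det _).1 h4.isUnit
  rw [Matrix.det_mul] at h5
  exact (Matrix.isUnit_iff_isUnit_det _).2 (isUnit_of_mul_isUnit_right h5)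

/-- `φ` is a bijection from `U(2L)_inv` onto `U(L,L)`, with inverse `ψ`. -/
theorem stmt_2 (L : ℕ) (hL : 1 ≤ L) :
    Set.BijOn (phiMap (L := L)) (U2Linv L) (ULL L) ∧
    Set.InvOn (psiMap (L := L)) (phiMap (L := L)) (U2Linv L) (ULL L) := by
  have hpsi : Set.MapsTo (psiMap (L := L)) (ULL L) (U2Linv L) := by
    intro T hT
    have hu := ULL_unit T hT
    have hb : IsUnit (psiMap T).toBlocks₁₂ := by
      simpa [psiMap] using hu
    exact ⟨(phi_mem_iff _ hb).1 (by rwa [phi_psi T hu]), hb⟩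
  have hinv : Set.InvOn (psiMap (L := L)) (phiMap (L := L)) (U2Linv L) (ULL L) :=
    ⟨fun S hS => psi_phi S hS.2, fun T hT => phi_psi T (ULL_unit T hT)⟩
  exact ⟨hinv.bijOn (fun S hS => (phi_mem_iff S hS.2).2 hS.1) hpsi, hinv⟩
end

section
/- Let S = [[α, β],[γ, δ]] ∈ U(2L)_inv and set φ(S) = [[γ − δβ⁻¹α, δβ⁻¹],[−β⁻¹α, β⁻¹]]. Then for any vectors φ, φ', ψ, ψ' ∈ ℂ^L, one has S·(ψ, ψ')ᵀ = (φ, φ')ᵀ if and only if φ(S)·(ψ, φ)ᵀ = (φ', ψ')ᵀ. -/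
open Matrix

/-- For `S = [[α, β],[γ, δ]]` unitary with `β` invertible and
`φ(S) = [[γ − δβ⁻¹α, δβ⁻¹],[−β⁻¹α, β⁻¹]]`, one has
`S (ψ, ψ')ᵀ = (φ, φ')ᵀ ↔ φ(S) (ψ, φ)ᵀ = (φ', ψ')ᵀ`. -/
theorem stmt_3 (L : ℕ) (hL : 1 ≤ L)
    (α β γ δ : Matrix (Fin L) (Fin L) ℂ)
    (hS : fromBlocks α β γ δ ∈ Matrix.unitaryGroup (Fin L ⊕ Fin L) ℂ)
    (hβ : IsUnit β)
    (p p' q q' : Fin L → ℂ) :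
    (fromBlocks α β γ δ).mulVec (Sum.elim q q') = Sum.elim p p' ↔
      (fromBlocks (γ - δ * β⁻¹ * α) (δ * β⁻¹) (-(β⁻¹ * α)) β⁻¹).mulVec (Sum.elim q p) =
        Sum.elim p' q' := by
  have hdet : IsUnit β.det := (Matrix.isUnit_iff_isUnit_det β).1 hβ
  have h1 : β * β⁻¹ = 1 := Matrix.mul_nonsing_inv β hdet
  have h2 : β⁻¹ * β = 1 := Matrix.nonsing_inv_mul β hdet
  have e : ∀ a b c d : Fin L → ℂ, Sum.elim a b = Sum.elim c d ↔ a = c ∧ b = d := by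
    intro a b c d
    constructor
    · intro h
      exact ⟨funext fun i => congrFun h (Sum.inl i), funext fun i => congrFun h (Sum.inr i)⟩
    · rintro ⟨rfl, rfl⟩
      rfl
  rw [Matrix.fromBlocks_mulVec, Matrix.fromBlocks_mulVec, e, e]
  simp only [Sum.elim_comp_inl, Sum.elim_comp_inr, Matrix.sub_mulVec, Matrix.neg_mulVec,
    ← Matrix.mulVec_mulVec]
  constructor
  · rintro ⟨rfl, rfl⟩
    have h3 : β⁻¹ *ᵥ (β *ᵥ q') = q' := by
      rw [Matrix.mulVec_mulVec, h2, Matrix.one_mulVec]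
    simp only [Matrix.mulVec_add, h3]
    constructor <;> abel
  · rintro ⟨rfl, rfl⟩
    have h3 : ∀ v, β *ᵥ (β⁻¹ *ᵥ v) = v := by
      intro v
      rw [Matrix.mulVec_mulVec, h1, Matrix.one_mulVec]
    simp only [Matrix.mulVec_add, Matrix.mulVec_neg, h3]
    constructor <;> abel
end

section
/- Let S = [[α, β],[γ, δ]] ∈ U(2L)_inv and set φ(S) = [[γ − δβ⁻¹α, δβ⁻¹],[−β⁻¹α, β⁻¹]]. Then for any vectors φ, φ', ψ, ψ', ξ, ξ' ∈ ℂ^L, one has S·(ψ, ψ')ᵀ = (φ, φ')ᵀ + (ξ, ξ')ᵀ if and only if φ(S)·(ψ, φ)ᵀ = (φ', ψ')ᵀ + [[−δβ⁻¹, 1],[−β⁻¹, 0]]·(ξ, ξ')ᵀ. -/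
open Matrix

/-- For `S = [[α, β],[γ, δ]]` unitary with `β` invertible and
`φ(S) = [[γ − δβ⁻¹α, δβ⁻¹],[−β⁻¹α, β⁻¹]]`, one has, for any inhomogeneity `(ξ, ξ')`,
`S (ψ, ψ')ᵀ = (φ, φ')ᵀ + (ξ, ξ')ᵀ ↔
 φ(S) (ψ, φ)ᵀ = (φ', ψ')ᵀ + [[−δβ⁻¹, 1],[−β⁻¹, 0]] (ξ, ξ')ᵀ`. -/
theorem stmt_4 (L : ℕ) (hL : 1 ≤ L)
    (α β γ δ : Matrix (Fin L) (Fin L) ℂ)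
    (hS : fromBlocks α β γ δ ∈ Matrix.unitaryGroup (Fin L ⊕ Fin L) ℂ)
    (hβ : IsUnit β)
    (p p' q q' x x' : Fin L → ℂ) :
    (fromBlocks α β γ δ).mulVec (Sum.elim q q') = Sum.elim p p' + Sum.elim x x' ↔
      (fromBlocks (γ - δ * β⁻¹ * α) (δ * β⁻¹) (-(β⁻¹ * α)) β⁻¹).mulVec (Sum.elim q p) =
        Sum.elim p' q' +
          (fromBlocks (-(δ * β⁻¹)) 1 (-β⁻¹) 0).mulVec (Sum.elim x x') := by
  have hd : IsUnit β.det := (Matrix.isUnit_iff_isUnit_det β).1 hβ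
  have key : ∀ a b c d : Fin L → ℂ, Sum.elim a b = Sum.elim c d ↔ a = c ∧ b = d := by
    intro a b c d
    constructor
    · intro h
      exact ⟨funext fun i => congrFun h (Sum.inl i), funext fun i => congrFun h (Sum.inr i)⟩
    · rintro ⟨rfl, rfl⟩
      rfl
  have hadd : ∀ a b c d : Fin L → ℂ,
      Sum.elim a b + Sum.elim c d = Sum.elim (a + c) (b + d) := by
    intro a b c d
    ext i
    cases i <;> rfl
  have h1 : ∀ v, β *ᵥ (β⁻¹ *ᵥ v) = v := fun v => by
    rw [Matrix.mulVec_mulVec, Matrix.mul_nonsing_inv _ hd, Matrix.one_mulVec]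
  have h2 : ∀ v, β⁻¹ *ᵥ (β *ᵥ v) = v := fun v => by
    rw [Matrix.mulVec_mulVec, Matrix.nonsing_inv_mul _ hd, Matrix.one_mulVec]
  simp only [Matrix.fromBlocks_mulVec, Sum.elim_comp_inl, Sum.elim_comp_inr, hadd, key,
    Matrix.sub_mulVec, Matrix.neg_mulVec, Matrix.one_mulVec, Matrix.zero_mulVec,
    ← Matrix.mulVec_mulVec]
  have hq : α *ᵥ q + β *ᵥ q' = p + x ↔ q' = β⁻¹ *ᵥ p + β⁻¹ *ᵥ x - β⁻¹ *ᵥ (α *ᵥ q) := by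
    constructor
    · intro h
      rw [← Matrix.mulVec_add, ← h, Matrix.mulVec_add, h2]
      abel
    · rintro rfl
      rw [Matrix.mulVec_sub, Matrix.mulVec_add, h1, h1, h1]
      abel
  rw [hq]
  constructor
  · rintro ⟨rfl, h⟩
    rw [Matrix.mulVec_sub, Matrix.mulVec_add] at h
    refine ⟨?_, by abel⟩
    linear_combination (exp := 1) h
  · rintro ⟨h, h'⟩
    have e : q' = β⁻¹ *ᵥ p + β⁻¹ *ᵥ x - β⁻¹ *ᵥ (α *ᵥ q) := by
      linear_combination (exp := 1) -h'
    refine ⟨e, ?_⟩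
    rw [e, Matrix.mulVec_sub, Matrix.mulVec_add]
    linear_combination (exp := 1) h
end

section
/- Let Ψ and Φ be 2L×L complex matrices of rank L such that Ψ*𝓛Ψ = 0 and such that Φ*𝓛Φ is either positive definite or negative definite. Then the L×L matrix Ψ*𝓛Φ is invertible. -/
open Matrix
open scoped ComplexOrder

lemma aux_form (L : ℕ) (A B C D : Matrix (Fin L) (Fin L) ℂ) :
    (fromRows A B)ᴴ * Lform L * (fromRows C D) = Aᴴ * C - Bᴴ * D := by
  rw [Lform, conjTranspose_fromRows_eq_fromCols_conjTranspose, fromCols_mul_fromBlocks,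
    fromCols_mul_fromRows]
  simp [sub_eq_add_neg]

lemma aux_isUnit (L : ℕ) (M : Matrix (Fin L) (Fin L) ℂ) (h : M.rank = L) : IsUnit M := by
  rw [← Matrix.mulVec_surjective_iff_isUnit]
  have : LinearMap.range M.mulVecLin = ⊤ := by
    apply Submodule.eq_top_of_finrank_eq
    simpa [Matrix.rank] using h
  exact LinearMap.range_eq_top.mp this

lemma aux_main (L : ℕ) (A B C D : Matrix (Fin L) (Fin L) ℂ)
    (hA : IsUnit A) (h : Aᴴ * A = Bᴴ * B) (v : Fin L → ℂ)
    (hv : (Aᴴ * C - Bᴴ * D) *ᵥ v = 0) :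
    star v ⬝ᵥ ((Cᴴ * C - Dᴴ * D) *ᵥ v) = 0 := by
  have hd : IsUnit A.det := (Matrix.isUnit_iff_isUnit_det A).mp hA
  have hdH : IsUnit Aᴴ.det := by rw [det_conjTranspose]; exact hd.star
  set U := B * A⁻¹ with hU
  have h1 : Uᴴ * U = 1 := by
    rw [hU, conjTranspose_mul, conjTranspose_nonsing_inv, Matrix.mul_assoc, ← Matrix.mul_assoc Bᴴ,
      ← h, Matrix.mul_assoc, Matrix.mul_nonsing_inv _ hd, Matrix.mul_one,
      Matrix.nonsing_inv_mul _ hdH]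
  have h2 : U * Uᴴ = 1 := mul_eq_one_comm.mp h1
  have hB : Bᴴ = Aᴴ * Uᴴ := by
    rw [← conjTranspose_mul, hU, Matrix.mul_assoc, Matrix.nonsing_inv_mul _ hd, Matrix.mul_one]
  have hc : C *ᵥ v = Uᴴ *ᵥ (D *ᵥ v) := by
    rw [hB, Matrix.mul_assoc, ← Matrix.mul_sub, ← mulVec_mulVec] at hv
    have h3 := congrArg (fun w => (Aᴴ)⁻¹ *ᵥ w) hv
    simp only [mulVec_mulVec, ← Matrix.mul_assoc, Matrix.nonsing_inv_mul _ hdH, Matrix.one_mul,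
      mulVec_zero] at h3
    rw [sub_mulVec, sub_eq_zero] at h3
    rw [h3, mulVec_mulVec]
  have key : ∀ X : Matrix (Fin L) (Fin L) ℂ, ∀ w : Fin L → ℂ, star w ⬝ᵥ ((Xᴴ * X) *ᵥ w)
      = star (X *ᵥ w) ⬝ᵥ (X *ᵥ w) := by
    intro X w
    rw [star_mulVec, ← mulVec_mulVec, dotProduct_mulVec]
  rw [sub_mulVec, dotProduct_sub, key, key, hc, ← key, conjTranspose_conjTranspose, h2,
    one_mulVec, sub_self]

/-- If `Ψ`, `Φ` are `2L×L` matrices of rank `L` with `Ψ*𝓛Ψ = 0` and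
`Φ*𝓛Φ` positive or negative definite, then `Ψ*𝓛Φ` is invertible. -/
theorem stmt_9 (L : ℕ) (hL : 1 ≤ L)
    (Ψ Φ : Matrix (Fin L ⊕ Fin L) (Fin L) ℂ)
    (hΨrank : Ψ.rank = L) (hΦrank : Φ.rank = L)
    (hΨ : Ψᴴ * Lform L * Ψ = 0)
    (hΦ : (Φᴴ * Lform L * Φ).PosDef ∨ (-(Φᴴ * Lform L * Φ)).PosDef) :
    IsUnit (Ψᴴ * Lform L * Φ) := by
  obtain ⟨A, B, rfl⟩ : ∃ A B, Ψ = fromRows A B := ⟨_, _, (fromRows_toRows Ψ).symm⟩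
  obtain ⟨C, D, rfl⟩ : ∃ C D, Φ = fromRows C D := ⟨_, _, (fromRows_toRows Φ).symm⟩
  rw [aux_form] at hΨ hΦ ⊢
  have h : Aᴴ * A = Bᴴ * B := sub_eq_zero.mp hΨ
  have hA : IsUnit A := by
    rw [← rank_conjTranspose_mul_self, conjTranspose_fromRows_eq_fromCols_conjTranspose,
      fromCols_mul_fromRows, ← h] at hΨrank
    have h2 := aux_isUnit L _ hΨrank
    rw [← two_mul, ← Matrix.mul_assoc, Matrix.isUnit_iff_isUnit_det, det_mul] at h2
    exact (Matrix.isUnit_iff_isUnit_det A).mpr (isUnit_of_mul_isUnit_right h2)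
  rw [Matrix.isUnit_iff_isUnit_det, isUnit_iff_ne_zero]
  intro h0
  obtain ⟨v, hv0, hv⟩ := Matrix.exists_mulVec_eq_zero_iff.mpr h0
  have h3 := aux_main L A B C D hA h v hv
  rcases hΦ with hp | hp
  · exact (hp.dotProduct_mulVec_pos hv0).ne' h3
  · have := hp.dotProduct_mulVec_pos hv0
    rw [neg_mulVec, dotProduct_neg, h3] at this
    simp at this
end
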